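/- Let r > 0, a > b > 0, and set α = √(2/r)·(√a − √b), β = √(r/2)·(√a + √b), k = (√a − √b)/(√a + √b). Let sn, cn, dn : ℝ → ℝ be differentiable functions satisfying sn' = cn·dn, cn' = −sn·dn, dn' = −k²·sn·cn with sn(0) = 0, cn(0) = 1, dn(0) = 1. Define x(t) = a·((dn(βt) + k·cn(βt))/(1 + k))² and y(t) = α·sn(βt). Then x(0) = a, y(0) = 0, x(t) > 0 for all t, x and y satisfy x'(t) = −r·x(t)·y(t) and y'(t) = x(t) − a·b/x(t) for all t ∈ ℝ, and moreover x(t) = a·((1 − k)/(dn(βt) − k·cn(βt)))² for all t. -/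

import Mathlib

/-!
Write `P = dn + k cn` and `M = dn - k cn`, evaluated at `βt`. The two first integrals
`sn² + cn² = 1` and `dn² + k² sn² = 1` give `P M = 1 - k²`, which is positive since `0 < k < 1`.
Hence `P` and `M` never vanish, which yields the positivity of `x` and its second formula.
The equation for `x` holds because `P' = -kβ sn P` and `2kβ = rα`. For the equation for `y`,
both `a / (1 + k)²` and `b / (1 - k)²` equal `(√a + √b)² / 4`, so
`x - ab/x = (√a + √b)² / 4 * (P² - M²) = (a - b) cn dn`, while `αβ = a - b`.
-/

/-- A consequence of the two first integrals of the Jacobi system; it is the product `P M`. -/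
lemma jacobi_mul_conj (k : ℝ) (sn cn dn : ℝ → ℝ)
    (hsn : ∀ t : ℝ, HasDerivAt sn (cn t * dn t) t)
    (hcn : ∀ t : ℝ, HasDerivAt cn (-(sn t * dn t)) t)
    (hdn : ∀ t : ℝ, HasDerivAt dn (-(k ^ 2 * sn t * cn t)) t)
    (hsn0 : sn 0 = 0) (hcn0 : cn 0 = 1) (hdn0 : dn 0 = 1) (t : ℝ) :
    (dn t + k * cn t) * (dn t - k * cn t) = 1 - k ^ 2 := by
  have h1 : ∀ t, HasDerivAt (fun t => sn t ^ 2 + cn t ^ 2) 0 t := fun t =>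
    (((hsn t).pow 2).add ((hcn t).pow 2)).congr_deriv (by push_cast; ring)
  have h2 : ∀ t, HasDerivAt (fun t => dn t ^ 2 + k ^ 2 * sn t ^ 2) 0 t := fun t =>
    (((hdn t).pow 2).add (((hsn t).pow 2).const_mul (k ^ 2))).congr_deriv (by push_cast; ring)
  have e1 := is_const_of_deriv_eq_zero (fun t => (h1 t).differentiableAt)
    (fun t => (h1 t).deriv) t 0
  have e2 := is_const_of_deriv_eq_zero (fun t => (h2 t).differentiableAt)
    (fun t => (h2 t).deriv) t 0
  simp only [hsn0, hcn0, hdn0] at e1 e2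
  linear_combination e2 - k ^ 2 * e1

/-- The pair `x(t) = a((dn(βt) + k cn(βt))/(1+k))²`, `y(t) = α sn(βt)` solves the
planar system `x' = −r x y`, `y' = x − ab/x` with `x(0) = a`, `y(0) = 0`,
`x > 0`; moreover `x(t) = a((1−k)/(dn(βt) − k cn(βt)))²`. -/
theorem planar_system_explicit_solution (r a b : ℝ) (hr : r > 0)
    (hab : a > b) (hb : b > 0) (α β k : ℝ)
    (hα : α = Real.sqrt (2 / r) * (Real.sqrt a - Real.sqrt b))
    (hβ : β = Real.sqrt (r / 2) * (Real.sqrt a + Real.sqrt b))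
    (hk : k = (Real.sqrt a - Real.sqrt b) / (Real.sqrt a + Real.sqrt b))
    (sn cn dn : ℝ → ℝ)
    (hsn : ∀ t : ℝ, HasDerivAt sn (cn t * dn t) t)
    (hcn : ∀ t : ℝ, HasDerivAt cn (-(sn t * dn t)) t)
    (hdn : ∀ t : ℝ, HasDerivAt dn (-(k ^ 2 * sn t * cn t)) t)
    (hsn0 : sn 0 = 0) (hcn0 : cn 0 = 1) (hdn0 : dn 0 = 1)
    (x y : ℝ → ℝ)
    (hxdef : ∀ t : ℝ, x t = a * ((dn (β * t) + k * cn (β * t)) / (1 + k)) ^ 2)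
    (hydef : ∀ t : ℝ, y t = α * sn (β * t)) :
    x 0 = a ∧ y 0 = 0 ∧ (∀ t : ℝ, x t > 0) ∧
      (∀ t : ℝ, HasDerivAt x (-r * x t * y t) t) ∧
      (∀ t : ℝ, HasDerivAt y (x t - a * b / x t) t) ∧
      (∀ t : ℝ, x t = a * ((1 - k) / (dn (β * t) - k * cn (β * t))) ^ 2) := by
  have hp : 0 < √a := Real.sqrt_pos.2 (hb.trans hab)
  have hq : 0 < √b := Real.sqrt_pos.2 hb
  have hpq : √b < √a := Real.sqrt_lt_sqrt hb.le hab
  have hpa : √a ^ 2 = a := Real.sq_sqrt (hb.trans hab).le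
  have hqb : √b ^ 2 = b := Real.sq_sqrt hb.le
  have hs : 0 < √(r / 2) := Real.sqrt_pos.2 (by positivity)
  have hsr : √(r / 2) ^ 2 = r / 2 := Real.sq_sqrt (by positivity)
  have hinv : √(2 / r) = (√(r / 2))⁻¹ := by rw [← Real.sqrt_inv, inv_div]
  rw [hinv] at hα
  generalize √(r / 2) = s at *
  generalize √a = p at *
  generalize √b = q at *
  have hsum : 0 < p + q := add_pos hp hq
  have hk1 : 1 + k = 2 * p / (p + q) := by rw [hk]; field_simp; ring
  have hk2 : 1 - k = 2 * q / (p + q) := by rw [hk]; field_simp; ring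
  have k1 : 0 < 1 + k := by rw [hk1]; positivity
  have k2 : 0 < 1 - k := by rw [hk2]; positivity
  have hr2 : r = 2 * s ^ 2 := by linarith
  have hαβ : α * β = a - b := by
    rw [hα, hβ, ← hpa, ← hqb]; field_simp; ring
  have hrα : r * α = 2 * k * β := by
    rw [hα, hβ, hk, hr2]; field_simp
  have hPM := fun t => jacobi_mul_conj k sn cn dn hsn hcn hdn hsn0 hcn0 hdn0 (β * t)
  have hne : ∀ t, (dn (β * t) + k * cn (β * t)) * (dn (β * t) - k * cn (β * t)) ≠ 0 := by
    intro t
    rw [hPM t, show 1 - k ^ 2 = (1 + k) * (1 - k) by ring]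
    positivity
  have hP := fun t => left_ne_zero_of_mul (hne t)
  have hM := fun t => right_ne_zero_of_mul (hne t)
  have hlin : ∀ t, HasDerivAt (fun t => β * t) β t := fun t => by
    simpa using (hasDerivAt_id t).const_mul β
  have hsecond : ∀ t, x t = a * ((1 - k) / (dn (β * t) - k * cn (β * t))) ^ 2 := by
    intro t
    have h : (dn (β * t) + k * cn (β * t)) / (1 + k)
        = (1 - k) / (dn (β * t) - k * cn (β * t)) := by
      rw [div_eq_div_iff k1.ne' (hM t), hPM t]; ring
    rw [hxdef, h]
  have hca : a / (1 + k) ^ 2 = (p + q) ^ 2 / 4 := by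
    rw [hk1, ← hpa]; field_simp; norm_num
  have hcb : b / (1 - k) ^ 2 = (p + q) ^ 2 / 4 := by
    rw [hk2, ← hqb]; field_simp; norm_num
  refine ⟨?_, ?_, ?_, ?_, ?_, hsecond⟩
  · rw [hxdef, mul_zero, hcn0, hdn0, mul_one, div_self k1.ne']; ring
  · rw [hydef, mul_zero, hsn0, mul_zero]
  · intro t
    rw [hxdef]
    have := hP t
    have ha : 0 < a := hb.trans hab
    positivity
  · intro t
    have hc := (hcn (β * t)).comp t (hlin t)
    have hd := (hdn (β * t)).comp t (hlin t)
    have h := (((hd.add (hc.const_mul k)).div_const (1 + k)).pow 2).const_mul a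
    rw [show x = fun t => a * ((dn (β * t) + k * cn (β * t)) / (1 + k)) ^ 2 from funext hxdef]
    refine h.congr_deriv ?_
    simp only [hydef, Function.comp_apply, Pi.add_apply]
    push_cast
    linear_combination
      (a * ((dn (β * t) + k * cn (β * t)) / (1 + k)) ^ 2 * sn (β * t)) * hrα
  · intro t
    have h := ((hsn (β * t)).comp t (hlin t)).const_mul α
    rw [show y = fun t => α * sn (β * t) from funext hydef]
    refine h.congr_deriv ?_
    -- The second formula for `x` turns the reciprocal `ab/x` into a multiple of `M²`.
    have e1 : x t = a / (1 + k) ^ 2 * (dn (β * t) + k * cn (β * t)) ^ 2 := by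
      rw [hxdef]; field_simp
    have e2 : a * b / x t = b / (1 - k) ^ 2 * (dn (β * t) - k * cn (β * t)) ^ 2 := by
      have ha : a ≠ 0 := (hb.trans hab).ne'
      have := hM t
      rw [hsecond]; field_simp
    have hkS : (p + q) ^ 2 * k = a - b := by
      rw [hk, ← hpa, ← hqb]; field_simp; ring
    rw [e2, e1, hca, hcb]
    linear_combination cn (β * t) * dn (β * t) * (hαβ - hkS)
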